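/- For any finite simple graph G of order n with minimum degree δ such that δ̄ := δ − φ > 0, where φ = max{k, l−1}, the parametric domination number satisfies γ_{k,l}(G) ≤ (1 − δ̄ / ((1+δ̄)^{1+1/δ̄} · b_{φ−1}^{1/δ̄})) · n, where b_{φ−1} = C(δ, φ−1). -/

import Mathlib

open Finset Real

/-- The parametric domination number γ_{k,l}: the minimum cardinality of a set D such that
every vertex outside D has at least k members of D in its closed neighbourhood, and every
vertex of D has at least l members of D in its closed neighbourhood. -/
noncomputable def paramDomNum {V : Type*} [Fintype V] [DecidableEq V]
    (G : SimpleGraph V) [DecidableRel G.Adj] (k l : ℕ) : ℕ :=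
  sInf {m : ℕ | ∃ D : Finset V,
    (∀ v, v ∉ D → k ≤ ((insert v (G.neighborFinset v)) ∩ D).card) ∧
    (∀ v, v ∈ D → l ≤ ((insert v (G.neighborFinset v)) ∩ D).card) ∧
    m = D.card}

/-!
Write `δ = φ + s` and choose `δ` neighbours `S v` of every vertex `v`. Put each vertex into a
random set `B` independently with probability `q`, and start from the complement of `B`. It
contains `φ` members of `S v` unless `r = |S v ∩ B| > s`, in which case adding back
`r - s ≤ C(r, s + 1)` members of `S v ∩ B` repairs `v`. The expected number of `(s + 1)`-subsets of
`S v` inside `B` is `C(δ, s + 1) q ^ (s + 1)`, so some outcome gives at most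
`(1 - q + C(δ, s + 1) q ^ (s + 1)) n` vertices. Minimising over `q` gives the bound, as
`C(δ, s + 1) = C(δ, φ - 1)`.
-/

lemma sub_le_choose_succ (r s : ℕ) : r - s ≤ r.choose (s + 1) := by
  induction r with
  | zero => simp
  | succ r ih =>
    rw [Nat.choose_succ_succ']
    rcases le_or_gt s r with hsr | hrs
    · have := Nat.choose_pos hsr
      omega
    · omega

lemma choose_card_inter_eq_card_filter {α : Type*} [DecidableEq α] (S B : Finset α) (t : ℕ) :
    (#(S ∩ B)).choose t = #{T ∈ S.powersetCard t | T ⊆ B} := by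
  rw [← card_powersetCard]
  congr 1
  ext T
  simp only [mem_powersetCard, mem_filter, subset_inter_iff]
  tauto

section BernoulliWeight

variable {V : Type*} [Fintype V] [DecidableEq V]

/-- The probability that a random subset of `V`, containing each element independently with
probability `q`, equals `B`. It is a polynomial in `q`, hence makes sense in every commutative
ring. -/
def bernoulliWeight {R : Type*} [CommRing R] (q : R) (B : Finset V) : R :=
  q ^ #B * (1 - q) ^ #Bᶜ

lemma bernoulliWeight_nonneg {q : ℝ} (hq : q ∈ Set.Icc 0 1) (B : Finset V) :
    0 ≤ bernoulliWeight q B :=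
  mul_nonneg (pow_nonneg hq.1 _) (pow_nonneg (sub_nonneg.2 hq.2) _)

variable {R : Type*} [CommRing R]

lemma bernoulliWeight_union (q : R) {T C : Finset V} (hC : C ⊆ Tᶜ) :
    bernoulliWeight q (T ∪ C) = q ^ #T * (q ^ #C * (1 - q) ^ (#Tᶜ - #C)) := by
  have hdisj : Disjoint T C := disjoint_of_subset_right hC disjoint_compl_right
  rw [bernoulliWeight, card_union_of_disjoint hdisj, compl_union, inter_comm, inter_comm Cᶜ,
    ← sdiff_eq_inter_compl, card_sdiff_of_subset hC, pow_add, mul_assoc]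

lemma sum_superset_bernoulliWeight (q : R) (T : Finset V) :
    ∑ B with T ⊆ B, bernoulliWeight q B = q ^ #T := by
  have hinj : Set.InjOn (T ∪ ·) (Tᶜ.powerset : Set (Finset V)) := by
    intro C hC C' hC' h
    have hC := disjoint_of_subset_left (mem_powerset.1 hC) disjoint_compl_left
    have hC' := disjoint_of_subset_left (mem_powerset.1 hC') disjoint_compl_left
    simpa [union_sdiff_cancel_left, hC.symm, hC'.symm] using congrArg (· \ T) h
  calc ∑ B with T ⊆ B, bernoulliWeight q B
      = ∑ B ∈ Icc T univ, bernoulliWeight q B := by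
        congr 1
        ext B
        simp
    _ = ∑ C ∈ Tᶜ.powerset, bernoulliWeight q (T ∪ C) := by
        rw [Icc_eq_image_powerset (subset_univ T), ← compl_eq_univ_sdiff, sum_image hinj]
    _ = ∑ C ∈ Tᶜ.powerset, q ^ #T * (q ^ #C * (1 - q) ^ (#Tᶜ - #C)) :=
        sum_congr rfl fun C hC ↦ bernoulliWeight_union q (mem_powerset.1 hC)
    _ = q ^ #T := by
        rw [← mul_sum, sum_pow_mul_eq_add_pow, add_sub_cancel, one_pow, mul_one]

lemma sum_bernoulliWeight (q : R) : ∑ B : Finset V, bernoulliWeight q B = 1 := by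
  simpa using sum_superset_bernoulliWeight q (∅ : Finset V)

lemma sum_bernoulliWeight_mul_choose_card_inter (q : R) (S : Finset V) (t : ℕ) :
    ∑ B, bernoulliWeight q B * (#(S ∩ B)).choose t = (#S).choose t * q ^ t := by
  calc ∑ B, bernoulliWeight q B * (#(S ∩ B)).choose t
      = ∑ B, ∑ T ∈ S.powersetCard t, if T ⊆ B then bernoulliWeight q B else 0 := by
        simp_rw [choose_card_inter_eq_card_filter, ← sum_boole, mul_sum, mul_ite, mul_one, mul_zero]
    _ = ∑ T ∈ S.powersetCard t, ∑ B with T ⊆ B, bernoulliWeight q B := by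
        rw [sum_comm]
        simp_rw [sum_filter]
    _ = ∑ _ ∈ S.powersetCard t, q ^ t :=
        sum_congr rfl fun _ hT ↦ by
          rw [sum_superset_bernoulliWeight, (mem_powersetCard.1 hT).2]
    _ = (#S).choose t * q ^ t := by rw [sum_const, card_powersetCard, nsmul_eq_mul]

lemma sum_bernoulliWeight_mul_card (q : R) :
    ∑ B : Finset V, bernoulliWeight q B * #B = Fintype.card V * q := by
  simpa using sum_bernoulliWeight_mul_choose_card_inter q (univ : Finset V) 1

lemma exists_le_sum_bernoulliWeight_mul {q : ℝ} (hq : q ∈ Set.Icc 0 1) (f : Finset V → ℝ) :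
    ∃ B, f B ≤ ∑ C, bernoulliWeight q C * f C := by
  obtain ⟨B, hB⟩ := Finite.exists_min f
  refine ⟨B, ?_⟩
  calc f B = ∑ C : Finset V, bernoulliWeight q C * f B := by
        rw [← sum_mul, sum_bernoulliWeight, one_mul]
    _ ≤ ∑ C, bernoulliWeight q C * f C := by
        gcongr with C
        exacts [bernoulliWeight_nonneg hq C, hB C]

end BernoulliWeight

section Transversal

variable {V ι : Type*} [Fintype V] [DecidableEq V] [Fintype ι] {φ s : ℕ}

lemma exists_forall_le_card_inter {S : ι → Finset V} (hS : ∀ i, φ + s ≤ #(S i))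
    (B : Finset V) :
    ∃ D, (∀ i, φ ≤ #(S i ∩ D)) ∧ #D ≤ #Bᶜ + ∑ i, (#(S i ∩ B)).choose (s + 1) := by
  have hE (i : ι) : ∃ E ⊆ S i ∩ B, #E = #(S i ∩ B) - s := exists_subset_card_eq (Nat.sub_le _ _)
  choose E hE_sub hE_card using hE
  refine ⟨Bᶜ ∪ univ.biUnion E, fun i ↦ ?_, ?_⟩
  · have hsub : S i \ B ∪ E i ⊆ S i ∩ (Bᶜ ∪ univ.biUnion E) := by
      rw [sdiff_eq_inter_compl, inter_union_distrib_left]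
      exact union_subset_union_right <| subset_inter ((hE_sub i).trans inter_subset_left)
        (subset_biUnion_of_mem E (mem_univ i))
    have hdisj : Disjoint (S i \ B) (E i) :=
      disjoint_of_subset_right ((hE_sub i).trans inter_subset_right) sdiff_disjoint
    have hle := card_le_card hsub
    rw [card_union_of_disjoint hdisj, hE_card] at hle
    have hsplit := card_sdiff_add_card_inter (S i) B
    have := hS i
    omega
  · calc #(Bᶜ ∪ univ.biUnion E) ≤ #Bᶜ + ∑ i, #(E i) :=
          (card_union_le _ _).trans (Nat.add_le_add_left card_biUnion_le _)
      _ ≤ #Bᶜ + ∑ i, (#(S i ∩ B)).choose (s + 1) := by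
          gcongr with i
          exact (hE_card i).trans_le (sub_le_choose_succ _ s)

lemma sum_bernoulliWeight_mul_card_compl_add_sum_choose {R : Type*} [CommRing R] (q : R)
    {S : ι → Finset V} {d : ℕ} (hS : ∀ i, #(S i) = d) (t : ℕ) :
    ∑ B, bernoulliWeight q B * ((#Bᶜ + ∑ i, (#(S i ∩ B)).choose t : ℕ) : R) =
      (1 - q) * Fintype.card V + d.choose t * q ^ t * Fintype.card ι := by
  have hcompl : ∑ B : Finset V, bernoulliWeight q B * (#Bᶜ : R) = (1 - q) * Fintype.card V := by
    simp_rw [card_compl, Nat.cast_sub (card_le_univ _), mul_sub, sum_sub_distrib, ← sum_mul,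
      sum_bernoulliWeight, sum_bernoulliWeight_mul_card]
    ring
  have hchoose : ∑ B, bernoulliWeight q B * ∑ i, ((#(S i ∩ B)).choose t : R) =
      d.choose t * q ^ t * Fintype.card ι := by
    simp_rw [mul_sum]
    rw [sum_comm]
    simp_rw [sum_bernoulliWeight_mul_choose_card_inter, hS]
    rw [sum_const, card_univ, nsmul_eq_mul, mul_comm]
  simp_rw [Nat.cast_add, Nat.cast_sum, mul_add, sum_add_distrib, hcompl, hchoose]

lemma exists_forall_le_card_inter_and_card_le {S : ι → Finset V} (hS : ∀ i, φ + s ≤ #(S i))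
    {q : ℝ} (hq : q ∈ Set.Icc 0 1) :
    ∃ D, (∀ i, φ ≤ #(S i ∩ D)) ∧ (#D : ℝ) ≤
      (1 - q) * Fintype.card V + (φ + s).choose (s + 1) * q ^ (s + 1) * Fintype.card ι := by
  choose S' hS'_sub hS'_card using fun i ↦ exists_subset_card_eq (hS i)
  obtain ⟨B, hB⟩ := exists_le_sum_bernoulliWeight_mul hq
    fun B ↦ ((#Bᶜ + ∑ i, (#(S' i ∩ B)).choose (s + 1) : ℕ) : ℝ)
  rw [sum_bernoulliWeight_mul_card_compl_add_sum_choose q hS'_card] at hB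
  obtain ⟨D, hD, hD_card⟩ := exists_forall_le_card_inter (fun i ↦ (hS'_card i).ge) B
  exact ⟨D, fun i ↦ (hD i).trans (card_le_card (inter_subset_inter_right (hS'_sub i))),
    (Nat.cast_le.2 hD_card).trans hB⟩

end Transversal

section ParamDominating

variable {V : Type*} [Fintype V] [DecidableEq V] {G : SimpleGraph V} [DecidableRel G.Adj]
  {k l φ s : ℕ} {D : Finset V}

variable (G k l D) in
/-- `D` is a `(k, l)`-dominating set of `G`; the closed neighbourhood of `v` is encoded as
`insert v (G.neighborFinset v)`. -/
def IsParamDominating : Prop :=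
  (∀ v, v ∉ D → k ≤ #(insert v (G.neighborFinset v) ∩ D)) ∧
    ∀ v, v ∈ D → l ≤ #(insert v (G.neighborFinset v) ∩ D)

lemma IsParamDominating.paramDomNum_le (hD : IsParamDominating G k l D) :
    paramDomNum G k l ≤ #D :=
  Nat.sInf_le ⟨D, hD.1, hD.2, rfl⟩

lemma isParamDominating_of_forall_le_card_neighborFinset_inter (hk : k ≤ φ) (hl : l ≤ φ + 1)
    (hD : ∀ v, φ ≤ #(G.neighborFinset v ∩ D)) : IsParamDominating G k l D := by
  refine ⟨fun v hv ↦ ?_, fun v hv ↦ ?_⟩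
  · rw [insert_inter_of_notMem hv]
    exact hk.trans (hD v)
  · rw [insert_inter_of_mem hv, card_insert_of_notMem (by simp)]
    exact hl.trans (Nat.add_le_add_right (hD v) 1)

lemma paramDomNum_le_of_add_le_minDegree (hk : k ≤ φ) (hl : l ≤ φ + 1)
    (hdeg : φ + s ≤ G.minDegree) {q : ℝ} (hq : q ∈ Set.Icc 0 1) :
    (paramDomNum G k l : ℝ) ≤
      (1 - q + (φ + s).choose (s + 1) * q ^ (s + 1)) * Fintype.card V := by
  have hN (v : V) : φ + s ≤ #(G.neighborFinset v) := by
    rw [G.card_neighborFinset_eq_degree]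
    exact hdeg.trans (G.minDegree_le_degree v)
  obtain ⟨D, hD, hD_card⟩ := exists_forall_le_card_inter_and_card_le hN hq
  have hdom := isParamDominating_of_forall_le_card_neighborFinset_inter hk hl hD
  rw [add_mul]
  exact (Nat.cast_le.2 hdom.paramDomNum_le).trans hD_card

end ParamDominating

lemma exists_mem_Icc_one_sub_add_mul_rpow_eq {x b : ℝ} (hx : 0 < x) (hb : 1 ≤ (1 + x) * b) :
    ∃ q ∈ Set.Icc (0 : ℝ) 1,
      1 - q + b * q ^ (x + 1) = 1 - x / ((1 + x) ^ (1 + 1 / x) * b ^ (1 / x)) := by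
  have hx1 : 0 < 1 + x := by positivity
  have hb0 : 0 < b := pos_of_mul_pos_right (one_pos.trans_le hb) hx1.le
  -- The minimiser in `q`, where the derivative `-1 + (1 + x) * b * q ^ x` vanishes.
  set q : ℝ := (((1 + x) * b) ^ (1 / x))⁻¹ with hq
  have hq0 : 0 < q := by positivity
  have hq1 : q ≤ 1 := inv_le_one_of_one_le₀ (Real.one_le_rpow hb (by positivity))
  have hqx : q ^ x = ((1 + x) * b)⁻¹ := by
    rw [hq, Real.inv_rpow (by positivity), ← Real.rpow_mul (by positivity),
      one_div_mul_cancel hx.ne', Real.rpow_one]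
  refine ⟨q, ⟨hq0.le, hq1⟩, ?_⟩
  have hden : (1 + x) ^ (1 + 1 / x) * b ^ (1 / x) = (1 + x) * q⁻¹ := by
    rw [Real.rpow_add hx1, Real.rpow_one, mul_assoc, ← Real.mul_rpow hx1.le hb0.le, hq, inv_inv]
  rw [hden, Real.rpow_add_one hq0.ne', hqx]
  field_simp
  ring

theorem param_domination_bound
    {V : Type*} [Fintype V] [DecidableEq V]
    (G : SimpleGraph V) [DecidableRel G.Adj]
    (n : ℕ) (hn : n = Fintype.card V)
    (δ : ℕ) (hδ : δ = G.minDegree)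
    (k l : ℕ) (hk : 1 ≤ k) (hl : 1 ≤ l)
    (φ : ℕ) (hφ : φ = max k (l - 1))
    (db : ℝ) (hdb : db = (δ : ℝ) - φ) (hpos : 0 < db)
    (b : ℝ) (hb : b = (δ.choose (φ - 1) : ℕ)) :
    (paramDomNum G k l : ℝ) ≤
      (1 - db / ((1 + db) ^ (1 + 1 / db) * b ^ (1 / db))) * n := by
  have hlt : φ < δ := by exact_mod_cast sub_pos.1 (hdb ▸ hpos)
  obtain ⟨s, rfl⟩ := Nat.exists_eq_add_of_le hlt.le
  obtain rfl : db = s := by rw [hdb, Nat.cast_add, add_sub_cancel_left]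
  have hsymm : (φ + s).choose (φ - 1) = (φ + s).choose (s + 1) :=
    Nat.choose_symm_of_eq_add (by omega)
  have hb1 : 1 ≤ b := by rw [hb]; exact_mod_cast Nat.choose_pos (by omega)
  obtain ⟨q, hq, hopt⟩ := exists_mem_Icc_one_sub_add_mul_rpow_eq hpos
    (one_le_mul_of_one_le_of_one_le (by linarith) hb1)
  rw [← hopt, hb, hsymm, hn, ← Nat.cast_add_one, Real.rpow_natCast]
  exact paramDomNum_le_of_add_le_minDegree (by omega) (by omega) hδ.le hq
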